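/- Let (Ω, P) be a probability space, A ∈ ℝ^{n×n} symmetric with 0 ⪯ A ⪯ I, and W_0, …, W_{N−1} ∈ ℝ^{P×P} orthogonal. Suppose ε ≥ 0 is such that for every integrable random matrix Z : Ω → ℝ^{n×P} with E[‖Z‖] ≤ 1 one has E[‖AZ − E[Z]‖] ≤ ε. Then for every integrable random matrix X : Ω → ℝ^{n×P} with E[‖X‖] ≤ 1, with U and Ū the IGT and E-IGT recursions of X (U_0 = Ū_0 = X, U_{m+1} = |(I − A)U_m W_m|, Ū_{m+1} = |(Ū_m − E[Ū_m])W_m|, all integrable), one has E[(Σ_{m=0}^N ‖A U_m − E[Ū_m]‖²)^{1/2}] ≤ 2^{N+2} ε. -/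

import Mathlib

/-!
Write `D m = E‖U m − Ū m‖`. Since `U m − A U m − Ū m + E[Ū m]` equals
`(I − A)(U m − Ū m) − (A Ū m − E[Ū m])`, and since `A`, `I − A`, right multiplication by an
orthogonal matrix and the entrywise absolute value are all 1-Lipschitz for the Frobenius norm,
`D (m+1) ≤ D m + E‖A Ū m − E[Ū m]‖`. The triangle inequality and `‖E Z‖ ≤ E‖Z‖` give
`E‖Ū m‖ ≤ 2 ^ m`, so by homogeneity the ergodicity hypothesis bounds the last term by `2 ^ m ε`;
hence `D m ≤ (2 ^ m − 1) ε`. Likewise `E‖A U m − E[Ū m]‖ ≤ D m + 2 ^ m ε ≤ 2 ^ (m+1) ε`, and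
bounding the `ℓ²` norm over `m ≤ N` by the `ℓ¹` norm, the sum of these is at most `2 ^ (N+2) ε`.
-/

open Matrix MeasureTheory

/-- Squared Frobenius norm of a real matrix: `‖X‖² = Tr(XᵀX) = ∑ i j, X i j ^ 2`. -/
def frobSq {n P : ℕ} (X : Matrix (Fin n) (Fin P) ℝ) : ℝ := ∑ i, ∑ j, (X i j) ^ 2

/-- Frobenius norm of a real matrix. -/
noncomputable def frob {n P : ℕ} (X : Matrix (Fin n) (Fin P) ℝ) : ℝ := Real.sqrt (frobSq X)

/-- The (realization-wise) IGT recursion: `U 0 = X`,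
`U (m+1) = |(I - A) * U m * W m|` (entrywise absolute value). -/
def igtSeq {n P : ℕ} (A : Matrix (Fin n) (Fin n) ℝ)
    (W : ℕ → Matrix (Fin P) (Fin P) ℝ) (X : Matrix (Fin n) (Fin P) ℝ) :
    ℕ → Matrix (Fin n) (Fin P) ℝ
  | 0 => X
  | m + 1 => ((1 - A) * igtSeq A W X m * W m).map (|·|)

/-- Entrywise expectation of a random matrix. -/
noncomputable def matExp {Ω : Type*} [MeasurableSpace Ω] (μ : Measure Ω) {n P : ℕ}
    (X : Ω → Matrix (Fin n) (Fin P) ℝ) : Matrix (Fin n) (Fin P) ℝ :=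
  Matrix.of fun i j => ∫ ω, X ω i j ∂μ

/-- The E-IGT recursion: `Ū 0 = X`, `Ū (m+1) = |(Ū m − E[Ū m]) * W m|`. -/
noncomputable def eigtSeq {Ω : Type*} [MeasurableSpace Ω] (μ : Measure Ω) {n P : ℕ}
    (W : ℕ → Matrix (Fin P) (Fin P) ℝ) (X : Ω → Matrix (Fin n) (Fin P) ℝ) :
    ℕ → Ω → Matrix (Fin n) (Fin P) ℝ
  | 0 => X
  | m + 1 => fun ω =>
      ((eigtSeq μ W X m ω - matExp μ (eigtSeq μ W X m)) * W m).map (|·|)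

section Frobenius

variable {n P : ℕ}

/-- A matrix viewed as a vector of Euclidean space, so that its norm is the Frobenius norm. -/
noncomputable def flatten (X : Matrix (Fin n) (Fin P) ℝ) : EuclideanSpace ℝ (Fin n × Fin P) :=
  WithLp.toLp 2 fun p => X p.1 p.2

lemma frob_eq_norm (X : Matrix (Fin n) (Fin P) ℝ) : frob X = ‖flatten X‖ := by
  simp [frob, frobSq, flatten, EuclideanSpace.norm_eq, Fintype.sum_prod_type]

lemma frobSq_nonneg (X : Matrix (Fin n) (Fin P) ℝ) : 0 ≤ frobSq X := by
  unfold frobSq; positivity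

lemma frob_nonneg (X : Matrix (Fin n) (Fin P) ℝ) : 0 ≤ frob X := Real.sqrt_nonneg _

lemma frob_add_le (X Y : Matrix (Fin n) (Fin P) ℝ) : frob (X + Y) ≤ frob X + frob Y := by
  simp only [frob_eq_norm]
  exact norm_add_le (flatten X) (flatten Y)

lemma frob_sub_le (X Y : Matrix (Fin n) (Fin P) ℝ) : frob (X - Y) ≤ frob X + frob Y := by
  simp only [frob_eq_norm]
  exact norm_sub_le (flatten X) (flatten Y)

lemma frob_smul (c : ℝ) (X : Matrix (Fin n) (Fin P) ℝ) : frob (c • X) = |c| * frob X := by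
  simp only [frob_eq_norm]
  exact norm_smul c (flatten X)

lemma frob_map_abs (X : Matrix (Fin n) (Fin P) ℝ) : frob (X.map (|·|)) = frob X := by
  simp [frob, frobSq]

lemma frob_map_abs_sub_le (X Y : Matrix (Fin n) (Fin P) ℝ) :
    frob (X.map (|·|) - Y.map (|·|)) ≤ frob (X - Y) := by
  unfold frob frobSq
  refine Real.sqrt_le_sqrt (Finset.sum_le_sum fun i _ => Finset.sum_le_sum fun j _ => ?_)
  exact sq_le_sq.2 (abs_abs_sub_abs_le (X i j) (Y i j))

lemma frobSq_eq_trace (X : Matrix (Fin n) (Fin P) ℝ) : frobSq X = (Xᵀ * X).trace := by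
  simp only [frobSq, Matrix.trace, Matrix.diag, Matrix.mul_apply, Matrix.transpose_apply]
  rw [Finset.sum_comm]
  simp only [sq]

lemma frob_mul_orthogonal (X : Matrix (Fin n) (Fin P) ℝ) {W : Matrix (Fin P) (Fin P) ℝ}
    (hW : Wᵀ * W = 1) : frob (X * W) = frob X := by
  have hW' : W * Wᵀ = 1 := mul_eq_one_comm.1 hW
  unfold frob
  rw [frobSq_eq_trace, frobSq_eq_trace, Matrix.transpose_mul, Matrix.mul_assoc,
    Matrix.trace_mul_comm, Matrix.mul_assoc, Matrix.mul_assoc, hW', Matrix.mul_one]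

/-- If `0 ⪯ B ⪯ I` then `B` is a contraction: `I − B²` is positive semidefinite because it equals
`(I − B) + B (I − B) B + (I − B) B (I − B)`. -/
lemma frob_mul_le {B : Matrix (Fin n) (Fin n) ℝ} (hB : B.PosSemidef) (hB' : (1 - B).PosSemidef)
    (X : Matrix (Fin n) (Fin P) ℝ) : frob (B * X) ≤ frob X := by
  have hBt : Bᵀ = B := by simpa using hB.1.eq
  have h1 : (1 - B * B).PosSemidef := by
    have h2 := hB'.conjTranspose_mul_mul_same B
    have h3 := hB.conjTranspose_mul_mul_same (1 - B)
    rw [hB.1.eq] at h2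
    rw [hB'.1.eq] at h3
    have h4 := (hB'.add h2).add h3
    convert h4 using 1
    noncomm_ring
  have h5 := (h1.conjTranspose_mul_mul_same X).trace_nonneg
  refine Real.sqrt_le_sqrt ?_
  rw [frobSq_eq_trace, frobSq_eq_trace, Matrix.transpose_mul, hBt]
  rw [Matrix.conjTranspose_eq_transpose_of_trivial, Matrix.mul_sub, Matrix.sub_mul,
    Matrix.trace_sub, Matrix.mul_one] at h5
  simp only [Matrix.mul_assoc] at h5 ⊢
  linarith

end Frobenius

section Expectation

variable {Ω : Type*} [MeasurableSpace Ω] {μ : Measure Ω} {n P : ℕ}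

/-- Entrywise integrability of a random matrix. -/
def EntryIntegrable (μ : Measure Ω) (Z : Ω → Matrix (Fin n) (Fin P) ℝ) : Prop :=
  ∀ i j, Integrable (fun ω => Z ω i j) μ

lemma EntryIntegrable.sub {Y Z : Ω → Matrix (Fin n) (Fin P) ℝ} (hY : EntryIntegrable μ Y)
    (hZ : EntryIntegrable μ Z) : EntryIntegrable μ fun ω => Y ω - Z ω :=
  fun i j => (hY i j).sub (hZ i j)

lemma EntryIntegrable.const_mul (B : Matrix (Fin n) (Fin n) ℝ)
    {Z : Ω → Matrix (Fin n) (Fin P) ℝ} (hZ : EntryIntegrable μ Z) :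
    EntryIntegrable μ fun ω => B * Z ω := by
  intro i j
  simp only [Matrix.mul_apply]
  exact integrable_finsetSum _ fun k _ => (hZ k j).const_mul _

lemma entryIntegrable_const [IsFiniteMeasure μ] (M : Matrix (Fin n) (Fin P) ℝ) :
    EntryIntegrable μ fun _ => M :=
  fun _ _ => integrable_const _

lemma EntryIntegrable.flatten {Z : Ω → Matrix (Fin n) (Fin P) ℝ} (hZ : EntryIntegrable μ Z) :
    Integrable (fun ω => flatten (Z ω)) μ :=
  Integrable.of_eval_piLp fun p => hZ p.1 p.2

lemma EntryIntegrable.frob {Z : Ω → Matrix (Fin n) (Fin P) ℝ} (hZ : EntryIntegrable μ Z) :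
    Integrable (fun ω => frob (Z ω)) μ := by
  simp only [frob_eq_norm]
  exact hZ.flatten.norm

lemma frob_matExp_le {Z : Ω → Matrix (Fin n) (Fin P) ℝ} (hZ : EntryIntegrable μ Z) :
    frob (matExp μ Z) ≤ ∫ ω, frob (Z ω) ∂μ := by
  have h : flatten (matExp μ Z) = ∫ ω, flatten (Z ω) ∂μ := by
    ext p
    rw [eval_integral_piLp fun p => hZ p.1 p.2]
    rfl
  simp only [frob_eq_norm, h]
  exact norm_integral_le_integral_norm _

/-- Centering at most doubles the expected Frobenius norm. -/
lemma integral_frob_sub_matExp_le [IsProbabilityMeasure μ] {Z : Ω → Matrix (Fin n) (Fin P) ℝ}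
    (hZ : EntryIntegrable μ Z) :
    ∫ ω, frob (Z ω - matExp μ Z) ∂μ ≤ 2 * ∫ ω, frob (Z ω) ∂μ := by
  calc ∫ ω, frob (Z ω - matExp μ Z) ∂μ
      ≤ ∫ ω, (frob (Z ω) + frob (matExp μ Z)) ∂μ :=
        integral_mono (hZ.sub (entryIntegrable_const _)).frob
          (hZ.frob.add (integrable_const _)) fun ω => frob_sub_le _ _
    _ = (∫ ω, frob (Z ω) ∂μ) + frob (matExp μ Z) := by
        rw [integral_add hZ.frob (integrable_const _)]
        simp
    _ ≤ _ := by linarith [frob_matExp_le hZ]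

/-- The ergodicity hypothesis rescaled from the unit ball to the ball of radius `c`. -/
lemma integral_frob_ergodic_le {A : Matrix (Fin n) (Fin n) ℝ} {ε : ℝ}
    (hergo : ∀ Z : Ω → Matrix (Fin n) (Fin P) ℝ,
      (∀ i j, Integrable (fun ω => Z ω i j) μ) →
      (∫ ω, frob (Z ω) ∂μ) ≤ 1 →
      (∫ ω, frob (A * Z ω - matExp μ Z) ∂μ) ≤ ε)
    {Z : Ω → Matrix (Fin n) (Fin P) ℝ} (hZ : EntryIntegrable μ Z) {c : ℝ} (hc : 0 < c)
    (hZc : ∫ ω, frob (Z ω) ∂μ ≤ c) :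
    ∫ ω, frob (A * Z ω - matExp μ Z) ∂μ ≤ c * ε := by
  have h := hergo (fun ω => c⁻¹ • Z ω) (fun i j => (hZ i j).const_mul c⁻¹) (by
    simp only [frob_smul]
    rw [integral_const_mul, abs_of_pos (inv_pos.2 hc), inv_mul_le_iff₀ hc]
    simpa using hZc)
  have hE : matExp μ (fun ω => c⁻¹ • Z ω) = c⁻¹ • matExp μ Z := by
    ext i j
    exact integral_const_mul c⁻¹ fun ω => Z ω i j
  simp only [hE, Matrix.mul_smul, ← smul_sub, frob_smul] at h
  rwa [integral_const_mul, abs_of_pos (inv_pos.2 hc), inv_mul_le_iff₀ hc] at h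

end Expectation

lemma sqrt_sum_le_sum_sqrt (N : ℕ) {f : ℕ → ℝ} (hf : ∀ m, 0 ≤ f m) :
    Real.sqrt (∑ m ∈ Finset.range N, f m) ≤ ∑ m ∈ Finset.range N, Real.sqrt (f m) := by
  rw [Real.sqrt_le_left (Finset.sum_nonneg fun _ _ => Real.sqrt_nonneg _)]
  calc ∑ m ∈ Finset.range N, f m = ∑ m ∈ Finset.range N, Real.sqrt (f m) ^ 2 :=
        Finset.sum_congr rfl fun m _ => (Real.sq_sqrt (hf m)).symm
    _ ≤ _ := Finset.sum_sq_le_sq_sum_of_nonneg fun _ _ => Real.sqrt_nonneg _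

/-- On a probability space, with `A` symmetric satisfying `0 ⪯ A ⪯ I` and
`W_0, …, W_{N-1}` orthogonal, suppose `ε ≥ 0` is such that for every integrable random
matrix `Z` with `E[‖Z‖] ≤ 1` one has `E[‖AZ − E[Z]‖] ≤ ε`. Then for every integrable
random matrix `X` with `E[‖X‖] ≤ 1` (with the IGT recursion `U` and the E-IGT recursion
`Ū`, all integrable), `E[‖S^N X − S̄^N X‖] ≤ 2^{N+2} ε`. -/
theorem eigt_ergodicity_bound {Ω : Type*} [MeasurableSpace Ω] (μ : Measure Ω)
    [IsProbabilityMeasure μ] {n P : ℕ} (A : Matrix (Fin n) (Fin n) ℝ)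
    (hA_symm : A.IsSymm) (hA_psd : A.PosSemidef) (hIA_psd : (1 - A).PosSemidef)
    (N : ℕ) (W : ℕ → Matrix (Fin P) (Fin P) ℝ) (hW : ∀ m < N, (W m)ᵀ * W m = 1)
    (ε : ℝ) (hε : 0 ≤ ε)
    (hergo : ∀ Z : Ω → Matrix (Fin n) (Fin P) ℝ,
      (∀ i j, Integrable (fun ω => Z ω i j) μ) →
      (∫ ω, frob (Z ω) ∂μ) ≤ 1 →
      (∫ ω, frob (A * Z ω - matExp μ Z) ∂μ) ≤ ε)
    (X : Ω → Matrix (Fin n) (Fin P) ℝ)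
    (hX : ∀ i j, Integrable (fun ω => X ω i j) μ)
    (hX1 : (∫ ω, frob (X ω) ∂μ) ≤ 1)
    (hUint : ∀ m, ∀ i j, Integrable (fun ω => igtSeq A W (X ω) m i j) μ)
    (hUbarint : ∀ m, ∀ i j, Integrable (fun ω => eigtSeq μ W X m ω i j) μ) :
    (∫ ω, Real.sqrt (∑ m ∈ Finset.range (N + 1),
        frobSq (A * igtSeq A W (X ω) m - matExp μ (eigtSeq μ W X m))) ∂μ) ≤
      2 ^ (N + 2) * ε := by
  have hIA' : (1 - (1 - A)).PosSemidef := by simpa using hA_psd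
  have hU : ∀ m, EntryIntegrable μ fun ω => igtSeq A W (X ω) m := hUint
  have hV : ∀ m, EntryIntegrable μ (eigtSeq μ W X m) := hUbarint
  have hVbd : ∀ m ≤ N, ∫ ω, frob (eigtSeq μ W X m ω) ∂μ ≤ 2 ^ m := by
    intro m
    induction m with
    | zero => intro _; simpa [eigtSeq] using hX1
    | succ m ih =>
      intro hm
      simp only [eigtSeq, frob_map_abs, frob_mul_orthogonal _ (hW m hm)]
      have := integral_frob_sub_matExp_le (hV m)
      rw [pow_succ]
      linarith [ih (by omega)]
  have hG : ∀ m, EntryIntegrable μ fun ω =>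
      A * eigtSeq μ W X m ω - matExp μ (eigtSeq μ W X m) :=
    fun m => ((hV m).const_mul A).sub (entryIntegrable_const _)
  have hGbd : ∀ m ≤ N,
      ∫ ω, frob (A * eigtSeq μ W X m ω - matExp μ (eigtSeq μ W X m)) ∂μ ≤ 2 ^ m * ε :=
    fun m hm => integral_frob_ergodic_le hergo (hV m) (by positivity) (hVbd m hm)
  have hD : ∀ m ≤ N,
      ∫ ω, frob (igtSeq A W (X ω) m - eigtSeq μ W X m ω) ∂μ ≤ (2 ^ m - 1) * ε := by
    intro m
    induction m with
    | zero => intro _; simp [igtSeq, eigtSeq, frob, frobSq]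
    | succ m ih =>
      intro hm
      have hpt : ∀ ω, frob (igtSeq A W (X ω) (m + 1) - eigtSeq μ W X (m + 1) ω) ≤
          frob (igtSeq A W (X ω) m - eigtSeq μ W X m ω) +
            frob (A * eigtSeq μ W X m ω - matExp μ (eigtSeq μ W X m)) := by
        intro ω
        refine (frob_map_abs_sub_le _ _).trans ?_
        rw [← Matrix.sub_mul, frob_mul_orthogonal _ (hW m hm)]
        have hdec : (1 - A) * igtSeq A W (X ω) m -
              (eigtSeq μ W X m ω - matExp μ (eigtSeq μ W X m)) =
            (1 - A) * (igtSeq A W (X ω) m - eigtSeq μ W X m ω) -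
              (A * eigtSeq μ W X m ω - matExp μ (eigtSeq μ W X m)) := by
          simp only [Matrix.mul_sub, Matrix.sub_mul, Matrix.one_mul]
          abel
        rw [hdec]
        refine (frob_sub_le _ _).trans ?_
        gcongr
        exact frob_mul_le hIA_psd hIA' _
      have h := integral_mono ((hU (m + 1)).sub (hV (m + 1))).frob
        (((hU m).sub (hV m)).frob.add (hG m).frob) hpt
      simp only [Pi.add_apply] at h
      rw [integral_add ((hU m).sub (hV m)).frob (hG m).frob] at h
      have h1 := ih (by omega)
      have h2 := hGbd m (by omega)
      rw [pow_succ]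
      linarith
  have hT : ∀ m, EntryIntegrable μ fun ω =>
      A * igtSeq A W (X ω) m - matExp μ (eigtSeq μ W X m) :=
    fun m => ((hU m).const_mul A).sub (entryIntegrable_const _)
  have hTbd : ∀ m ≤ N,
      ∫ ω, frob (A * igtSeq A W (X ω) m - matExp μ (eigtSeq μ W X m)) ∂μ ≤
        2 ^ (m + 1) * ε := by
    intro m hm
    have hpt : ∀ ω, frob (A * igtSeq A W (X ω) m - matExp μ (eigtSeq μ W X m)) ≤
        frob (igtSeq A W (X ω) m - eigtSeq μ W X m ω) +
          frob (A * eigtSeq μ W X m ω - matExp μ (eigtSeq μ W X m)) := by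
      intro ω
      have hdec : A * igtSeq A W (X ω) m - matExp μ (eigtSeq μ W X m) =
          A * (igtSeq A W (X ω) m - eigtSeq μ W X m ω) +
            (A * eigtSeq μ W X m ω - matExp μ (eigtSeq μ W X m)) := by
        rw [Matrix.mul_sub]
        abel
      rw [hdec]
      refine (frob_add_le _ _).trans ?_
      gcongr
      exact frob_mul_le hA_psd hIA_psd _
    have h := integral_mono (hT m).frob (((hU m).sub (hV m)).frob.add (hG m).frob) hpt
    simp only [Pi.add_apply] at h
    rw [integral_add ((hU m).sub (hV m)).frob (hG m).frob] at h
    have h1 := hD m hm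
    have h2 := hGbd m hm
    rw [pow_succ]
    linarith
  have hgeom : ∀ K : ℕ, ∑ m ∈ Finset.range K, (2 : ℝ) ^ (m + 1) * ε ≤ 2 ^ (K + 1) * ε := by
    intro K
    induction K with
    | zero => simpa using hε
    | succ K ih =>
      rw [Finset.sum_range_succ, pow_succ _ (K + 1)]
      linarith
  calc _ ≤ ∫ ω, ∑ m ∈ Finset.range (N + 1),
        frob (A * igtSeq A W (X ω) m - matExp μ (eigtSeq μ W X m)) ∂μ := by
        refine integral_mono_of_nonneg (Filter.Eventually.of_forall fun ω => Real.sqrt_nonneg _)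
          (integrable_finsetSum _ fun m _ => (hT m).frob)
          (Filter.Eventually.of_forall fun ω => ?_)
        exact sqrt_sum_le_sum_sqrt (N + 1) fun m => frobSq_nonneg _
    _ = ∑ m ∈ Finset.range (N + 1),
        ∫ ω, frob (A * igtSeq A W (X ω) m - matExp μ (eigtSeq μ W X m)) ∂μ :=
        integral_finsetSum _ fun m _ => (hT m).frob
    _ ≤ ∑ m ∈ Finset.range (N + 1), 2 ^ (m + 1) * ε :=
        Finset.sum_le_sum fun m hm => hTbd m (by have := Finset.mem_range.1 hm; omega)
    _ ≤ _ := hgeom (N + 1)
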